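/- Let N ≥ 2. For any sequence of loss vectors ℓ_1, ℓ_2, … ∈ [0,1]^N and any T ∈ ℕ, the FTRL-CARL algorithm (FTRL with regularizer −H_B and regularizer scaling η_t = 2/√t, i.e., w_{t+1} minimizes ⟨L_t, w⟩ − (√(t+1)/2)·H_B(w) over the simplex) satisfies the deterministic regret bound: Σ_{t=1}^T ⟨ℓ_t, w_t⟩ − min_{i∈[N]} Σ_{t=1}^T ℓ_t(i) ≤ √(2·T·log N). -/

import Mathlib

/-- The error function `erf(z) = (2/√π)∫_0^z e^{-u²} du`. -/
noncomputable def erf (z : ℝ) : ℝ :=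
  2 / Real.sqrt Real.pi * ∫ u in (0 : ℝ)..z, Real.exp (-u ^ 2)

/-- `h_B(x) = x·√(2·log(1/x)) − √(π/2)·erf(√(log(1/x))) + x·(N−1)·√(π/2)` for `x ∈ (0,1]`,
with `h_B(0) = −√(π/2)`. -/
noncomputable def hB (N : ℕ) (x : ℝ) : ℝ :=
  if x = 0 then -Real.sqrt (Real.pi / 2)
  else x * Real.sqrt (2 * Real.log (1 / x))
    - Real.sqrt (Real.pi / 2) * erf (Real.sqrt (Real.log (1 / x)))
    + x * ((N : ℝ) - 1) * Real.sqrt (Real.pi / 2)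

noncomputable def HB {N : ℕ} (w : Fin N → ℝ) : ℝ := ∑ i, hB N (w i)

/-- FTRL-CARL with parameter `c > 0`: given losses `ℓ_1, ℓ_2, …` with cumulative losses
`L_t = Σ_{s=1}^t ℓ_s`, the weights satisfy
`w_{t+1} ∈ argmin_{w ∈ Δ_N} { ⟨L_t, w⟩ − (√(t+1)/c)·H_B(w) }`. -/
def IsCarl (N : ℕ) (c : ℝ) (ℓ : ℕ → Fin N → ℝ) (w : ℕ → Fin N → ℝ) : Prop :=
  ∀ t : ℕ, w (t + 1) ∈ stdSimplex ℝ (Fin N) ∧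
    ∀ v ∈ stdSimplex ℝ (Fin N),
      (∑ i, (∑ s ∈ Finset.Icc 1 t, ℓ s i) * w (t + 1) i)
          - Real.sqrt ((t : ℝ) + 1) / c * HB (w (t + 1)) ≤
        (∑ i, (∑ s ∈ Finset.Icc 1 t, ℓ s i) * v i)
          - Real.sqrt ((t : ℝ) + 1) / c * HB v

/-! The derivative of `h_B` is `√(2 log (1 / x))` up to a constant, so `-h_B''` is the inverse of
`x √(2 log (1 / x))`. By Cauchy–Schwarz and the maximum entropy bound, the latter weights sum to at
most `K = √(2 log N)` over a point of the simplex. A second application of Cauchy–Schwarz makes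
`H_B` strongly concave with constant `1 / K` for the `ℓ¹` norm. The same `K` bounds `H_B` itself,
because `erf √(log (1 / x))` is concave in `x` and hence lies above its chord `1 - x`, while `H_B`
vanishes at the vertices. The regret of any FTRL scheme is at most the range of the scaled
regularizer plus, for each round, a stability term inversely proportional to the strong concavity;
here both contributions are multiples of `K √T`, since `∑ 1 / √t ≤ 2 √T`.
-/

open Real Set Filter Topology

section UniformConvexity

variable {E : Type*} [NormedAddCommGroup E] [NormedSpace ℝ E] {s : Set E} {φ : ℝ → ℝ} {f : E → ℝ}

lemma uniformConcaveOn_const_mul {c : ℝ} (hc : 0 ≤ c) (hf : UniformConcaveOn s φ f) :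
    UniformConcaveOn s (fun r => c * φ r) (fun x => c * f x) := by
  refine ⟨hf.1, fun x hx y hy a b ha hb hab => ?_⟩
  have := mul_le_mul_of_nonneg_left (hf.2 hx hy ha hb hab) hc
  simp only [smul_eq_mul] at this ⊢
  linarith

lemma add_le_of_isMinOn_of_uniformConvexOn {x y : E} (hf : UniformConvexOn s φ f)
    (hx : x ∈ s) (hmin : IsMinOn f s x) (hy : y ∈ s) : f x + φ ‖x - y‖ ≤ f y := by
  have hsegment : ∀ r ∈ Ioo (0 : ℝ) 1, f x + (1 - r) * φ ‖x - y‖ ≤ f y := by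
    intro r ⟨hr0, hr1⟩
    have hr1' : 0 ≤ 1 - r := by linarith
    have hmin_r := hmin (hf.1 hx hy hr1' hr0.le (by ring))
    have hconv := hf.2 hx hy hr1' hr0.le (by ring)
    simp only [mem_ofPred_eq, smul_eq_mul] at hmin_r hconv
    refine le_of_mul_le_mul_left ?_ hr0
    linarith
  have hlim : Tendsto (fun r : ℝ => f x + (1 - r) * φ ‖x - y‖) (𝓝[>] 0)
      (𝓝 (f x + (1 - 0) * φ ‖x - y‖)) :=
    (Continuous.tendsto (by fun_prop) 0).mono_left nhdsWithin_le_nhds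
  rw [sub_zero, one_mul] at hlim
  exact le_of_tendsto hlim (eventually_of_mem (Ioo_mem_nhdsGT one_pos) hsegment)

lemma strongConcaveOn_of_lineMap {m : ℝ} (hs : Convex ℝ s)
    (hf : ∀ x ∈ s, ∀ y ∈ s, StrongConcaveOn (Icc 0 1) (m * ‖x - y‖ ^ 2)
      fun r : ℝ => f (AffineMap.lineMap x y r)) :
    StrongConcaveOn s m f := by
  refine ⟨hs, fun x hx y hy a b ha hb hab => ?_⟩
  have h := (hf x hx y hy).2 (left_mem_Icc.2 zero_le_one) (right_mem_Icc.2 zero_le_one) ha hb hab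
  simp only [AffineMap.lineMap_apply_zero, AffineMap.lineMap_apply_one, smul_eq_mul, mul_zero,
    mul_one, zero_add, zero_sub, norm_neg, norm_one, one_pow] at h ⊢
  rw [AffineMap.lineMap_apply_module, ← eq_sub_of_add_eq hab] at h
  linarith

lemma strongConcaveOn_of_hasDerivAt2_le {D : Set ℝ} (hD : Convex ℝ D) {f f' f'' : ℝ → ℝ} {m : ℝ}
    (hf : ContinuousOn f D) (hf' : ∀ x ∈ interior D, HasDerivAt f (f' x) x)
    (hf'' : ∀ x ∈ interior D, HasDerivAt f' (f'' x) x) (hle : ∀ x ∈ interior D, f'' x ≤ -m) :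
    StrongConcaveOn D m f := by
  simp only [strongConcaveOn_iff_convex, norm_eq_abs, sq_abs]
  refine concaveOn_of_hasDerivWithinAt2_nonpos hD (hf.add (by fun_prop))
    (f' := fun x => f' x + m * x) (f'' := fun x => f'' x + m) (fun x hx => ?_) (fun x hx => ?_)
    (fun x hx => by linarith [hle x hx])
  · have hsq : HasDerivAt (fun x : ℝ => m / 2 * x ^ 2) (m * x) x :=
      ((hasDerivAt_pow 2 x).const_mul (m / 2)).congr_deriv (by norm_num; ring)
    exact ((hf' x hx).add hsq).hasDerivWithinAt
  · exact ((hf'' x hx).add (hasDerivAt_const_mul m)).hasDerivWithinAt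

lemma lineMap_mem_Ioo_of_ne {a b x y r : ℝ} (hx : x ∈ Icc a b) (hy : y ∈ Icc a b) (hxy : x ≠ y)
    (hr : r ∈ Ioo (0 : ℝ) 1) : AffineMap.lineMap x y r ∈ Ioo a b := by
  rw [← interior_Icc]
  exact (strictConvex_Icc (𝕜 := ℝ) a b).openSegment_subset hx hy hxy
    (lineMap_mem_openSegment ℝ x y hr)

lemma hasDerivAt_comp_lineMap {f f' : ℝ → ℝ} {a b x y r : ℝ}
    (hf : ∀ z ∈ Ioo a b, HasDerivAt f (f' z) z) (hx : x ∈ Icc a b) (hy : y ∈ Icc a b)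
    (hr : r ∈ Ioo (0 : ℝ) 1) :
    HasDerivAt (fun t => f (AffineMap.lineMap x y t))
      (f' (AffineMap.lineMap x y r) * (y - x)) r := by
  rcases eq_or_ne x y with rfl | hxy
  · simpa using hasDerivAt_const r (f x)
  · exact (hf _ (lineMap_mem_Ioo_of_ne hx hy hxy hr)).comp r AffineMap.hasDerivAt_lineMap

end UniformConvexity

section SeparableFunctions

variable {ι : Type*} [Fintype ι]

lemma inv_mul_sq_norm_le_sum_sq_div (z : PiLp 1 fun _ : ι => ℝ) {g : ι → ℝ} {K : ℝ} (hK : 0 < K)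
    (hg : ∀ i, 0 ≤ g i) (hz : ∀ i, z i ≠ 0 → g i ≠ 0) (hgK : ∑ i, g i ≤ K) :
    K⁻¹ * ‖z‖ ^ 2 ≤ ∑ i, z i ^ 2 / g i := by
  have hterm : ∀ i, 0 ≤ z i ^ 2 / g i := fun i => div_nonneg (sq_nonneg _) (hg i)
  rw [inv_mul_le_iff₀' hK, PiLp.norm_eq_of_L1]
  calc (∑ i, ‖z i‖) ^ 2 ≤ (∑ i, z i ^ 2 / g i) * ∑ i, g i := by
        refine Finset.sum_sq_le_sum_mul_sum_of_sq_le_mul _ (fun i _ => hterm i)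
          (fun i _ => hg i) fun i _ => ?_
        rw [norm_eq_abs, sq_abs]
        exact (div_mul_cancel_of_imp fun hi => by simpa using mt (hz i) (not_not.2 hi)).ge
    _ ≤ (∑ i, z i ^ 2 / g i) * K :=
        mul_le_mul_of_nonneg_left hgK (Finset.sum_nonneg fun i _ => hterm i)

theorem strongConcaveOn_sum_of_sum_le {s : Set (PiLp 1 fun _ : ι => ℝ)} {a b K : ℝ}
    {h h' g : ℝ → ℝ} (hs : Convex ℝ s) (hsab : ∀ x ∈ s, ∀ i, x i ∈ Icc a b)
    (hcont : ContinuousOn h (Icc a b)) (hh' : ∀ x ∈ Ioo a b, HasDerivAt h (h' x) x)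
    (hh'' : ∀ x ∈ Ioo a b, HasDerivAt h' (-(g x)⁻¹) x) (hg : ∀ x ∈ Icc a b, 0 ≤ g x)
    (hg₀ : ∀ x ∈ Ioo a b, g x ≠ 0) (hK : 0 < K) (hsum : ∀ x ∈ s, ∑ i, g (x i) ≤ K) :
    StrongConcaveOn s K⁻¹ fun x => ∑ i, h (x i) := by
  refine strongConcaveOn_of_lineMap hs fun x hx y hy => ?_
  have hmem : ∀ r ∈ Icc (0 : ℝ) 1, AffineMap.lineMap x y r ∈ s := fun r hr =>
    hs.lineMap_mem hx hy hr
  have hcoord : ∀ (r : ℝ) i, AffineMap.lineMap x y r i = AffineMap.lineMap (x i) (y i) r :=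
    fun r i => by simp [AffineMap.lineMap_apply]
  refine strongConcaveOn_of_hasDerivAt2_le (convex_Icc 0 1)
    (f' := fun r => ∑ i, h' (AffineMap.lineMap (x i) (y i) r) * (y i - x i))
    (f'' := fun r => ∑ i, -(g (AffineMap.lineMap (x i) (y i) r))⁻¹ * (y i - x i) * (y i - x i))
    ?_ ?_ ?_ ?_
  all_goals simp only [interior_Icc, hcoord]
  · refine continuousOn_finsetSum _ fun i _ => hcont.comp (by fun_prop) fun r hr => ?_
    rw [← hcoord]
    exact hsab _ (hmem r hr) i
  · exact fun r hr => HasDerivAt.fun_sum fun i _ =>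
      hasDerivAt_comp_lineMap hh' (hsab x hx i) (hsab y hy i) hr
  · exact fun r hr => HasDerivAt.fun_sum fun i _ =>
      (hasDerivAt_comp_lineMap hh'' (hsab x hx i) (hsab y hy i) hr).mul_const _
  · intro r hr
    have hmem_r := hmem r (Ioo_subset_Icc_self hr)
    have hnorm : K⁻¹ * ‖y - x‖ ^ 2 ≤
        ∑ i, (y - x) i ^ 2 / g (AffineMap.lineMap (x i) (y i) r) := by
      simp only [← hcoord]
      refine inv_mul_sq_norm_le_sum_sq_div _ hK (fun i => hg _ (hsab _ hmem_r i)) (fun i hi => ?_)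
        (hsum _ hmem_r)
      rw [hcoord]
      exact hg₀ _ (lineMap_mem_Ioo_of_ne (hsab x hx i) (hsab y hy i) (sub_ne_zero.1 hi).symm hr)
    rw [norm_sub_rev]
    refine (neg_le_neg hnorm).trans_eq' ?_
    rw [← Finset.sum_neg_distrib]
    exact Finset.sum_congr rfl fun i _ => by rw [PiLp.sub_apply]; ring

end SeparableFunctions

lemma mul_le_sq_div_add_mul_sq {c : ℝ} (hc : 0 < c) (G d : ℝ) :
    G * d ≤ G ^ 2 / (2 * c) + c / 2 * d ^ 2 := by
  have h : G ^ 2 / (2 * c) + c / 2 * d ^ 2 - G * d = (G - c * d) ^ 2 / (2 * c) := by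
    field_simp; ring
  have : 0 ≤ (G - c * d) ^ 2 / (2 * c) := by positivity
  linarith

section FTRL

variable {E : Type*} [NormedAddCommGroup E] [NormedSpace ℝ E] {s : Set E}

lemma convexOn_finsetSum {ι : Type*} {g : ι → E → ℝ} (hs : Convex ℝ s) (u : Finset ι)
    (hg : ∀ i ∈ u, ConvexOn ℝ s (g i)) : ConvexOn ℝ s fun x => ∑ i ∈ u, g i x := by
  rw [← Finset.sum_fn]
  exact Finset.sum_induction _ (ConvexOn ℝ s) (fun _ _ => ConvexOn.add) (convexOn_const 0 hs) hg

/-- Follow the regularized leader: at each round, `x (t + 1)` minimizes over `s` the cumulative loss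
of rounds `1, …, t` minus `a (t + 1)` times the (concave) regularizer `H`. -/
def IsFTRL (s : Set E) (H : E → ℝ) (a : ℕ → ℝ) (f : ℕ → E → ℝ) (x : ℕ → E) : Prop :=
  ∀ t, x (t + 1) ∈ s ∧
    IsMinOn (fun y => ∑ k ∈ Finset.Icc 1 t, f k y - a (t + 1) * H y) s (x (t + 1))

variable {H : E → ℝ} {a : ℕ → ℝ} {f : ℕ → E → ℝ} {x : ℕ → E}

namespace IsFTRL

lemma objective_add_le {σ : ℝ} (hx : IsFTRL s H a f x) (hf : ∀ t, ConvexOn ℝ s (f t))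
    (hH : StrongConcaveOn s σ H) (t : ℕ) (ha : 0 ≤ a (t + 1)) {v : E} (hv : v ∈ s) :
    ∑ k ∈ Finset.Icc 1 t, f k (x (t + 1)) - a (t + 1) * H (x (t + 1)) +
        a (t + 1) * (σ / 2 * ‖x (t + 1) - v‖ ^ 2) ≤
      ∑ k ∈ Finset.Icc 1 t, f k v - a (t + 1) * H v := by
  obtain ⟨hmem, hmin⟩ := hx t
  have hsum : ConvexOn ℝ s fun y => ∑ k ∈ Finset.Icc 1 t, f k y :=
    convexOn_finsetSum hH.1 _ fun k _ => hf k
  have hobjective := (uniformConvexOn_zero.2 hsum).sub (uniformConcaveOn_const_mul ha hH)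
  rw [zero_add] at hobjective
  exact add_le_of_isMinOn_of_uniformConvexOn hobjective hmem hmin hv

theorem sum_loss_le {σ G K : ℝ} (hx : IsFTRL s H a f x) (hf : ∀ t, ConvexOn ℝ s (f t))
    (hG : ∀ t, ∀ y ∈ s, ∀ z ∈ s, f t y - f t z ≤ G * ‖y - z‖) (hH : StrongConcaveOn s σ H)
    (hσ : 0 < σ) (hHK : ∀ y ∈ s, H y ≤ K) (ha : Monotone a) (ha₀ : 0 ≤ a 0)
    (ha_pos : ∀ t, 0 < a (t + 1)) (T : ℕ) {v : E} (hv : v ∈ s) :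
    ∑ t ∈ Finset.Icc 1 T, f t (x t) ≤ ∑ t ∈ Finset.Icc 1 T, f t v + a T * (K - H v) +
      ∑ t ∈ Finset.Icc 1 T, G ^ 2 / (2 * (a t * σ)) := by
  induction T generalizing v with
  | zero => simpa using mul_nonneg ha₀ (sub_nonneg.2 (hHK v hv))
  | succ T ih =>
    have hmem := (hx T).1
    -- The comparator for the earlier rounds is the next iterate, whatever `v` is.
    have hleader := ih hmem
    have hobjective := hx.objective_add_le hf hH T (ha_pos T).le hv
    have hscale : a T * (K - H (x (T + 1))) ≤ a (T + 1) * (K - H (x (T + 1))) :=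
      mul_le_mul_of_nonneg_right (ha T.le_succ) (sub_nonneg.2 (hHK _ hmem))
    have hloss := (hG (T + 1) _ hmem v hv).trans
      (mul_le_sq_div_add_mul_sq (mul_pos (ha_pos T) hσ) G _)
    simp only [Finset.sum_Icc_succ_top (Nat.le_add_left 1 T)]
    linarith

end IsFTRL

end FTRL

section SpecialFunctions

lemma hasDerivAt_erf (z : ℝ) : HasDerivAt erf (2 / √π * exp (-z ^ 2)) z := by
  have hcont : Continuous fun u : ℝ => exp (-u ^ 2) := by fun_prop
  exact (hcont.integral_hasStrictDerivAt 0 z).hasDerivAt.const_mul _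

lemma continuous_erf : Continuous erf :=
  continuous_iff_continuousAt.2 fun z => (hasDerivAt_erf z).continuousAt

lemma tendsto_erf_atTop : Tendsto erf atTop (𝓝 1) := by
  have hint : MeasureTheory.IntegrableOn (fun u : ℝ => exp (-u ^ 2)) (Ioi 0) := by
    simpa using (integrable_exp_neg_mul_sq one_pos).integrableOn
  have hgauss : ∫ u in Ioi (0 : ℝ), exp (-u ^ 2) = √π / 2 := by
    simpa using integral_gaussian_Ioi 1
  have hlim := (MeasureTheory.intervalIntegral_tendsto_integral_Ioi 0 hint tendsto_id).const_mul
    (2 / √π)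
  rwa [hgauss, div_mul_div_cancel₀' two_ne_zero, div_self (by positivity)] at hlim

/-- The function `√(2 log (1 / x))`, equal to the derivative of `h_B` on `(0, 1)` up to an additive
constant. It takes the junk value `0` at `x = 0`, which is harmless in products with `x`. -/
noncomputable def sqrtTwoLogInv (x : ℝ) : ℝ := √(2 * log (1 / x))

lemma two_mul_log_one_div_pos {x : ℝ} (hx : x ∈ Ioo (0 : ℝ) 1) : 0 < 2 * log (1 / x) :=
  mul_pos two_pos (log_pos (one_lt_one_div hx.1 hx.2))

lemma sqrtTwoLogInv_pos {x : ℝ} (hx : x ∈ Ioo (0 : ℝ) 1) : 0 < sqrtTwoLogInv x :=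
  sqrt_pos.2 (two_mul_log_one_div_pos hx)

lemma hasDerivAt_sqrtTwoLogInv {x : ℝ} (hx : x ∈ Ioo (0 : ℝ) 1) :
    HasDerivAt sqrtTwoLogInv (-(x * sqrtTwoLogInv x)⁻¹) x := by
  have hlog : HasDerivAt (fun y => 2 * log (1 / y)) (2 * -x⁻¹) x := by
    simpa only [one_div, log_inv] using (hasDerivAt_log hx.1.ne').fun_neg.const_mul 2
  refine (hlog.sqrt (two_mul_log_one_div_pos hx).ne').congr_deriv ?_
  rw [mul_div_mul_left _ _ two_ne_zero, mul_inv, ← neg_mul, div_eq_mul_inv]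
  rfl

lemma mul_sqrtTwoLogInv_eq {x : ℝ} (hx : 0 ≤ x) :
    x * sqrtTwoLogInv x = √x * √(2 * negMulLog x) := by
  have h : 2 * negMulLog x = x * (2 * log (1 / x)) := by
    rw [negMulLog, one_div, log_inv]; ring
  rw [h, sqrt_mul hx, ← mul_assoc, mul_self_sqrt hx, sqrtTwoLogInv]

lemma continuousOn_mul_sqrtTwoLogInv : ContinuousOn (fun x => x * sqrtTwoLogInv x) (Ici 0) := by
  have h : Continuous fun x => √x * √(2 * negMulLog x) := by fun_prop
  exact h.continuousOn.congr fun x hx => mul_sqrtTwoLogInv_eq hx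

/-- The function `erf √(log (1 / x))`, extended to `x = 0` by its limit `1`, so that the case
distinction in `h_B` disappears. -/
noncomputable def erfSqrtLogInv (x : ℝ) : ℝ := if x = 0 then 1 else erf √(log (1 / x))

lemma erfSqrtLogInv_zero : erfSqrtLogInv 0 = 1 := if_pos rfl

lemma erfSqrtLogInv_of_ne {x : ℝ} (hx : x ≠ 0) : erfSqrtLogInv x = erf √(log (1 / x)) := if_neg hx

lemma erfSqrtLogInv_one : erfSqrtLogInv 1 = 0 := by
  simp [erfSqrtLogInv, erf]

lemma continuousOn_erfSqrtLogInv : ContinuousOn erfSqrtLogInv (Ici 0) := by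
  intro x hx
  rcases eq_or_lt_of_le (mem_Ici.1 hx) with rfl | hx
  · rw [← continuousWithinAt_Ioi_iff_Ici, ContinuousWithinAt, erfSqrtLogInv_zero]
    have hlog : Tendsto (log ∘ fun x => 1 / x) (𝓝[>] 0) atTop := by
      simpa only [one_div] using tendsto_log_atTop.comp (tendsto_inv_nhdsGT_zero (𝕜 := ℝ))
    refine (tendsto_erf_atTop.comp (tendsto_sqrt_atTop.comp hlog)).congr' ?_
    filter_upwards [self_mem_nhdsWithin] with y hy
    exact (erfSqrtLogInv_of_ne (ne_of_gt hy)).symm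
  · have hcont : ContinuousAt (fun y => erf √(log (1 / y))) x :=
      continuous_erf.continuousAt.comp
        ((continuousAt_const.div continuousAt_id hx.ne').log (one_div_ne_zero hx.ne')).sqrt
    refine (hcont.congr ?_).continuousWithinAt
    filter_upwards [eventually_ne_nhds hx.ne'] with y hy using (erfSqrtLogInv_of_ne hy).symm

lemma hasDerivAt_erfSqrtLogInv {x : ℝ} (hx : x ∈ Ioo (0 : ℝ) 1) :
    HasDerivAt erfSqrtLogInv (-(√(π / 2) * sqrtTwoLogInv x)⁻¹) x := by
  have hsqrt : ∀ y, √(log (1 / y)) = sqrtTwoLogInv y / √2 := fun y => by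
    rw [sqrtTwoLogInv, sqrt_mul zero_le_two, mul_div_cancel_left₀ _ (by positivity)]
  have hexp : exp (-(sqrtTwoLogInv x / √2) ^ 2) = x := by
    rw [← hsqrt, sq_sqrt (log_nonneg (one_le_one_div hx.1 hx.2.le)), one_div, log_inv, neg_neg,
      exp_log hx.1]
  have hderiv := (hasDerivAt_erf _).comp x ((hasDerivAt_sqrtTwoLogInv hx).div_const √2)
  rw [hexp] at hderiv
  refine (hderiv.congr_deriv ?_).congr_of_eventuallyEq ?_
  · have hpos := sqrtTwoLogInv_pos hx
    have hx0 := hx.1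
    rw [sqrt_div pi_pos.le]
    field_simp
    simp
  · filter_upwards [eventually_ne_nhds hx.1.ne'] with y hy
    rw [erfSqrtLogInv_of_ne hy, hsqrt, Function.comp_apply]

lemma concaveOn_erfSqrtLogInv : ConcaveOn ℝ (Icc 0 1) erfSqrtLogInv := by
  refine AntitoneOn.concaveOn_of_deriv (convex_Icc 0 1)
    (continuousOn_erfSqrtLogInv.mono Icc_subset_Ici_self) ?_ ?_ <;> rw [interior_Icc]
  · exact fun x hx => (hasDerivAt_erfSqrtLogInv hx).differentiableAt.differentiableWithinAt
  · intro x hx y hy hxy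
    have hpos := sqrtTwoLogInv_pos hy
    have hx0 := hx.1
    have hy0 := hy.1
    rw [(hasDerivAt_erfSqrtLogInv hx).deriv, (hasDerivAt_erfSqrtLogInv hy).deriv]
    unfold sqrtTwoLogInv at hpos ⊢
    gcongr

lemma one_sub_le_erfSqrtLogInv {x : ℝ} (hx : x ∈ Icc (0 : ℝ) 1) : 1 - x ≤ erfSqrtLogInv x := by
  simpa [erfSqrtLogInv_zero, erfSqrtLogInv_one] using
    concaveOn_erfSqrtLogInv.2 (left_mem_Icc.2 zero_le_one) (right_mem_Icc.2 zero_le_one)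
      (sub_nonneg.2 hx.2) hx.1 (sub_add_cancel 1 x)

end SpecialFunctions

section Simplex

variable {ι : Type*} [Fintype ι]

lemma sum_negMulLog_le_log_card {w : ι → ℝ} (hw : w ∈ stdSimplex ℝ ι) :
    ∑ i, negMulLog (w i) ≤ log (Fintype.card ι) := by
  have : Nonempty ι := by
    by_contra h
    simpa [not_nonempty_iff.1 h] using hw.2
  have hcard : (0 : ℝ) < Fintype.card ι := mod_cast Fintype.card_pos
  have hjensen := concaveOn_negMulLog.le_map_sum (t := Finset.univ)
    (w := fun _ : ι => (Fintype.card ι : ℝ)⁻¹) (p := w) (fun _ _ => by positivity)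
    (by simp [hcard.ne']) fun i _ => hw.1 i
  simp only [smul_eq_mul, ← Finset.mul_sum, hw.2, mul_one] at hjensen
  rw [negMulLog, log_inv, neg_mul_neg] at hjensen
  exact le_of_mul_le_mul_left hjensen (inv_pos.2 hcard)

lemma sum_mul_sqrtTwoLogInv_le {w : ι → ℝ} (hw : w ∈ stdSimplex ℝ ι) :
    ∑ i, w i * sqrtTwoLogInv (w i) ≤ √(2 * log (Fintype.card ι)) := by
  have hentropy : ∀ i, 0 ≤ 2 * negMulLog (w i) := fun i =>
    mul_nonneg zero_le_two (negMulLog_nonneg (hw.1 i) (mem_Icc_of_mem_stdSimplex hw i).2)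
  calc ∑ i, w i * sqrtTwoLogInv (w i) = ∑ i, √(w i) * √(2 * negMulLog (w i)) :=
        Finset.sum_congr rfl fun i _ => mul_sqrtTwoLogInv_eq (hw.1 i)
    _ ≤ √(∑ i, w i) * √(∑ i, 2 * negMulLog (w i)) :=
        sum_sqrt_mul_sqrt_le _ hw.1 hentropy
    _ ≤ √(2 * log (Fintype.card ι)) := by
        rw [hw.2, sqrt_one, one_mul, ← Finset.mul_sum]
        gcongr
        exact sum_negMulLog_le_log_card hw

/-- The probability simplex, viewed in `ℝ^ι` with the `ℓ¹` norm. -/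
def l1Simplex (ι : Type*) [Fintype ι] : Set (PiLp 1 fun _ : ι => ℝ) :=
  WithLp.ofLp ⁻¹' stdSimplex ℝ ι

lemma convex_l1Simplex (ι : Type*) [Fintype ι] : Convex ℝ (l1Simplex ι) :=
  (convex_stdSimplex ℝ ι).linear_preimage (WithLp.linearEquiv 1 ℝ (ι → ℝ)).toLinearMap

lemma convexOn_sum_mul {s : Set (PiLp 1 fun _ : ι => ℝ)} (hs : Convex ℝ s) (l : ι → ℝ) :
    ConvexOn ℝ s fun x => ∑ i, l i * x i := by
  refine ⟨hs, fun x _ y _ a b _ _ _ => le_of_eq ?_⟩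
  simp only [PiLp.add_apply, PiLp.smul_apply, smul_eq_mul, mul_add, Finset.sum_add_distrib,
    Finset.mul_sum, mul_left_comm]

lemma sum_mul_le_of_sum_eq_zero {l z : ι → ℝ} {a b : ℝ}
    (hl : ∀ i, l i ∈ Icc a b) (hz : ∑ i, z i = 0) :
    ∑ i, l i * z i ≤ (b - a) / 2 * ∑ i, |z i| :=
  -- Centring `l` at the midpoint of `[a, b]` does not change the sum.
  calc ∑ i, l i * z i = ∑ i, (l i - (a + b) / 2) * z i := by
        simp only [sub_mul, Finset.sum_sub_distrib, ← Finset.mul_sum, hz, mul_zero, sub_zero]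
    _ ≤ ∑ i, (b - a) / 2 * |z i| := by
        refine Finset.sum_le_sum fun i _ => (le_abs_self _).trans ?_
        rw [abs_mul]
        gcongr
        exact abs_le.2 ⟨by linarith [(hl i).1], by linarith [(hl i).2]⟩
    _ = (b - a) / 2 * ∑ i, |z i| := (Finset.mul_sum _ _ _).symm

lemma sum_mul_sub_le_of_mem_l1Simplex {l : ι → ℝ} {a b : ℝ}
    (hl : ∀ i, l i ∈ Icc a b) {x y : PiLp 1 fun _ : ι => ℝ} (hx : x ∈ l1Simplex ι)
    (hy : y ∈ l1Simplex ι) :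
    ∑ i, l i * x i - ∑ i, l i * y i ≤ (b - a) / 2 * ‖x - y‖ := by
  have hsum : ∑ i, (x - y) i = 0 := by
    simp only [PiLp.sub_apply, Finset.sum_sub_distrib]
    rw [hx.2, hy.2, sub_self]
  simpa only [PiLp.norm_eq_of_L1, norm_eq_abs, PiLp.sub_apply, mul_sub, Finset.sum_sub_distrib]
    using sum_mul_le_of_sum_eq_zero hl hsum

end Simplex

section Regularizer

lemma hB_eq (N : ℕ) (x : ℝ) :
    hB N x = x * sqrtTwoLogInv x - √(π / 2) * erfSqrtLogInv x + x * (N - 1) * √(π / 2) := by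
  rcases eq_or_ne x 0 with rfl | hx
  · simp [hB, erfSqrtLogInv_zero]
  · rw [hB, if_neg hx, erfSqrtLogInv_of_ne hx, sqrtTwoLogInv]

lemma hasDerivAt_hB (N : ℕ) {x : ℝ} (hx : x ∈ Ioo (0 : ℝ) 1) :
    HasDerivAt (hB N) (sqrtTwoLogInv x + (N - 1) * √(π / 2)) x := by
  have hpos := sqrtTwoLogInv_pos hx
  have hx0 := hx.1
  rw [funext (hB_eq N)]
  refine ((((hasDerivAt_id x).mul (hasDerivAt_sqrtTwoLogInv hx)).sub
    ((hasDerivAt_erfSqrtLogInv hx).const_mul √(π / 2))).add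
    (((hasDerivAt_id x).mul_const ((N : ℝ) - 1)).mul_const √(π / 2))).congr_deriv ?_
  simp only [id]
  field_simp
  ring

lemma continuousOn_hB (N : ℕ) : ContinuousOn (hB N) (Ici 0) := by
  rw [funext (hB_eq N)]
  exact (continuousOn_mul_sqrtTwoLogInv.sub (continuousOn_erfSqrtLogInv.const_mul _)).add
    (by fun_prop)

lemma hB_le (N : ℕ) {x : ℝ} (hx : x ∈ Icc (0 : ℝ) 1) :
    hB N x ≤ x * sqrtTwoLogInv x + √(π / 2) * (N * x - 1) := by
  rw [hB_eq]
  linarith [mul_le_mul_of_nonneg_left (one_sub_le_erfSqrtLogInv hx) (sqrt_nonneg (π / 2))]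

variable {N : ℕ}

lemma HB_le {w : Fin N → ℝ} (hw : w ∈ stdSimplex ℝ (Fin N)) : HB w ≤ √(2 * log N) :=
  calc HB w ≤ ∑ i, (w i * sqrtTwoLogInv (w i) + √(π / 2) * (N * w i - 1)) :=
        Finset.sum_le_sum fun i _ => hB_le N (mem_Icc_of_mem_stdSimplex hw i)
    _ = ∑ i, w i * sqrtTwoLogInv (w i) := by
        rw [Finset.sum_add_distrib, ← Finset.mul_sum, Finset.sum_sub_distrib, ← Finset.mul_sum,
          hw.2]
        simp
    _ ≤ √(2 * log N) := by simpa using sum_mul_sqrtTwoLogInv_le hw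

lemma HB_single (i : Fin N) : HB (Pi.single i 1) = 0 := by
  have hoff : ∀ j ∈ Finset.univ.erase i, hB N (Pi.single (M := fun _ => ℝ) i 1 j) = -√(π / 2) :=
    fun j hj => by simp [hB, Finset.ne_of_mem_erase hj]
  rw [HB, ← Finset.add_sum_erase _ _ (Finset.mem_univ i), Finset.sum_congr rfl hoff,
    Finset.sum_const, Finset.card_erase_of_mem (Finset.mem_univ i), Finset.card_fin,
    Pi.single_eq_same, nsmul_eq_mul, Nat.cast_pred i.pos]
  simp [hB, erf]

lemma strongConcaveOn_HB (hN : 2 ≤ N) :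
    StrongConcaveOn (l1Simplex (Fin N)) (√(2 * log N))⁻¹ fun x => HB x.ofLp := by
  have hlog : 0 < log N := log_pos (mod_cast hN)
  refine strongConcaveOn_sum_of_sum_le (g := fun x => x * sqrtTwoLogInv x) (convex_l1Simplex _)
    (fun x hx i => mem_Icc_of_mem_stdSimplex hx i) ((continuousOn_hB N).mono Icc_subset_Ici_self)
    (fun x hx => hasDerivAt_hB N hx) (fun x hx => (hasDerivAt_sqrtTwoLogInv hx).add_const _)
    (fun x hx => mul_nonneg hx.1 (sqrt_nonneg _))
    (fun x hx => (mul_pos hx.1 (sqrtTwoLogInv_pos hx)).ne') (by positivity) fun x hx => ?_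
  simpa using sum_mul_sqrtTwoLogInv_le hx

end Regularizer

lemma sum_Icc_inv_sqrt_le (T : ℕ) : ∑ t ∈ Finset.Icc 1 T, (√t)⁻¹ ≤ 2 * √T := by
  induction T with
  | zero => simp
  | succ T ih =>
    have hpos : 0 < √((T : ℝ) + 1) := by positivity
    have hstep : (√((T : ℝ) + 1))⁻¹ ≤ 2 * (√(T + 1) - √T) := by
      rw [inv_le_iff_one_le_mul₀ hpos]
      nlinarith [sq_sqrt (show (0 : ℝ) ≤ T by positivity),
        sq_sqrt (show (0 : ℝ) ≤ T + 1 by positivity), sq_nonneg (√((T : ℝ) + 1) - √T)]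
    rw [Finset.sum_Icc_succ_top (Nat.le_add_left 1 T), Nat.cast_succ]
    linarith

namespace IsCarl

variable {N : ℕ} {c : ℝ} {ℓ w : ℕ → Fin N → ℝ}

lemma isFTRL (hw : IsCarl N c ℓ w) :
    IsFTRL (l1Simplex (Fin N)) (fun x => HB x.ofLp) (fun t => √t / c)
      (fun t x => ∑ i, ℓ t i * x i) fun t => WithLp.toLp 1 (w t) := by
  have hcomm : ∀ (t : ℕ) (v : Fin N → ℝ), ∑ k ∈ Finset.Icc 1 t, ∑ i, ℓ k i * v i =
      ∑ i, (∑ k ∈ Finset.Icc 1 t, ℓ k i) * v i := fun t v => by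
    simp only [Finset.sum_mul, Finset.sum_comm (s := Finset.Icc 1 t)]
  refine fun t => ⟨(hw t).1, fun y hy => ?_⟩
  simpa only [hcomm, Nat.cast_succ, mem_ofPred_eq] using (hw t).2 y.ofLp hy

theorem regret_le (hw : IsCarl N c ℓ w) (hN : 2 ≤ N) (hc : 0 < c)
    (hℓ : ∀ t i, ℓ t i ∈ Icc (0 : ℝ) 1) (T : ℕ) (i : Fin N) :
    ∑ t ∈ Finset.Icc 1 T, ∑ j, ℓ t j * w t j - ∑ t ∈ Finset.Icc 1 T, ℓ t i ≤
      (c / 4 + 1 / c) * √(2 * T * log N) := by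
  set K := √(2 * log N)
  have hlog : 0 < log N := log_pos (mod_cast hN)
  have hK : 0 < K := by positivity
  have hregret := hw.isFTRL.sum_loss_le (σ := K⁻¹) (G := (1 - 0) / 2) (K := K)
    (fun t => convexOn_sum_mul (convex_l1Simplex _) (ℓ t))
    (fun t y hy z hz => sum_mul_sub_le_of_mem_l1Simplex (hℓ t) hy hz) (strongConcaveOn_HB hN)
    (inv_pos.2 hK) (fun y hy => HB_le hy) (fun s t hst => by dsimp only; gcongr) (by simp)
    (fun t => by positivity) T (v := WithLp.toLp 1 (Pi.single i 1)) (single_mem_stdSimplex ℝ i)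
  have hstability : ∑ t ∈ Finset.Icc 1 T, ((1 - 0) / 2) ^ 2 / (2 * (√t / c * K⁻¹)) ≤
      c * K / 8 * (2 * √T) := by
    have hterm : ∀ t : ℕ, ((1 - 0) / 2) ^ 2 / (2 * (√t / c * K⁻¹)) = c * K / 8 * (√t)⁻¹ :=
      fun t => by field_simp; norm_num
    simp only [hterm, ← Finset.mul_sum]
    gcongr
    exact sum_Icc_inv_sqrt_le T
  have hsingle : ∀ t, ∑ j, ℓ t j * (Pi.single i 1 : Fin N → ℝ) j = ℓ t i := fun t => by
    simp [Pi.single_apply]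
  simp only [hsingle, HB_single, sub_zero] at hregret
  rw [mul_right_comm, sqrt_mul' _ T.cast_nonneg]
  calc _ ≤ √T / c * K + c * K / 8 * (2 * √T) := by linarith
    _ = (c / 4 + 1 / c) * (K * √T) := by ring

end IsCarl

theorem stmt4_general (N : ℕ) (hN : 2 ≤ N) {c : ℝ} (hc : 0 < c) (ℓ : ℕ → Fin N → ℝ)
    (hℓ : ∀ t i, ℓ t i ∈ Set.Icc (0 : ℝ) 1)
    (w : ℕ → Fin N → ℝ) (hw : IsCarl N c ℓ w) (T : ℕ) :
    (∑ t ∈ Finset.Icc 1 T, ∑ i, ℓ t i * w t i)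
        - sInf (Set.range fun i => ∑ t ∈ Finset.Icc 1 T, ℓ t i) ≤
      (c / 4 + 1 / c) * Real.sqrt (2 * T * Real.log N) := by
  have : Nonempty (Fin N) := ⟨⟨0, by omega⟩⟩
  refine sub_le_comm.1 (le_ciInf fun i => sub_le_comm.1 ?_)
  exact hw.regret_le hN hc hℓ T i

/-- for any losses in `[0,1]^N` (`N ≥ 2`) and any `T`, FTRL-CARL (with
regularizer `−H_B` and regularizer scaling `η_t = 2/√t`) satisfies the deterministic
regret bound `Σ_{t=1}^T ⟨ℓ_t, w_t⟩ − min_i Σ_{t=1}^T ℓ_t(i) ≤ √(2·T·log N)`. -/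
theorem stmt4 (N : ℕ) (hN : 2 ≤ N) (ℓ : ℕ → Fin N → ℝ)
    (hℓ : ∀ t i, ℓ t i ∈ Set.Icc (0 : ℝ) 1)
    (w : ℕ → Fin N → ℝ) (hw : IsCarl N 2 ℓ w) (T : ℕ) :
    (∑ t ∈ Finset.Icc 1 T, ∑ i, ℓ t i * w t i)
        - sInf (Set.range fun i => ∑ t ∈ Finset.Icc 1 T, ℓ t i) ≤
      Real.sqrt (2 * T * Real.log N) := by
  convert stmt4_general N hN two_pos ℓ hℓ w hw T using 1
  ring
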